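/- arXiv:2605.21358 — 3 statements merged into one kernel-verified Lean document; each statement's English description precedes it below -/
import Mathlib

section
/- Let β ∈ (0,1), let φ : ZMod 12 → ℝ satisfy 0 < φ_m < 1 for all m, let Φ = ∏_{j=1}^{12} φ_j, and for r = 1,…,12 define the weights w_{m,r} = β^r (∏_{j=1}^{r−1} φ_{m+j}) (1 − φ_{m+r}) / (1 − β^{12} Φ). Then for any X : ZMod 12 → ℝ, the function D_m = Σ_{r=1}^{12} w_{m,r} X_{m+r} is the unique function from ZMod 12 to ℝ satisfying the 12-periodic recursion D_m = β φ_{m+1} D_{m+1} + β (1 − φ_{m+1}) X_{m+1} for all m. -/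
open Finset

/-- `Φ = ∏_{j=1}^{12} φ_j`. -/
noncomputable def Phi (φ : ZMod 12 → ℝ) : ℝ := ∏ j : ZMod 12, φ j

/-- The weights `w_{m,r} = β^r (∏_{j=1}^{r−1} φ_{m+j}) (1 − φ_{m+r}) / (1 − β^{12} Φ)`. -/
noncomputable def wgt (β : ℝ) (φ : ZMod 12 → ℝ) (m : ZMod 12) (r : ℕ) : ℝ :=
  β ^ r * (∏ j ∈ Finset.range (r - 1), φ (m + ((j : ZMod 12) + 1))) *
    (1 - φ (m + (r : ZMod 12))) / (1 - β ^ 12 * Phi φ)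

/-- The intercept `D_m = Σ_{r=1}^{12} w_{m,r} X_{m+r}`. -/
noncomputable def Dint (β : ℝ) (φ : ZMod 12 → ℝ) (X : ZMod 12 → ℝ) (m : ZMod 12) : ℝ :=
  ∑ r ∈ Finset.Icc 1 12, wgt β φ m r * X (m + (r : ZMod 12))

/-- The product of `φ` over any twelve consecutive months is `Phi φ`. -/
theorem prod_range_twelve_eq_Phi (φ : ZMod 12 → ℝ) (m : ZMod 12) :
    ∏ j ∈ Finset.range 12, φ (m + ((j : ZMod 12) + 1)) = Phi φ := by
  have h_shift : ∏ j : ZMod 12, φ (m + (j + 1)) = Phi φ :=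
    Fintype.prod_equiv ((Equiv.addRight 1).trans (Equiv.addLeft m)) _ _ fun _ => rfl
  rw [← h_shift, Finset.prod_range]
  exact Finset.prod_congr rfl fun j _ => by
    rw [show ((j : ℕ) : ZMod 12) = j from ZMod.natCast_zmod_val (n := 12) j]

theorem pow_mul_Phi_lt_one {β : ℝ} (hβ : 0 < β ∧ β < 1) {φ : ZMod 12 → ℝ}
    (hφ : ∀ m, 0 < φ m ∧ φ m < 1) : β ^ 12 * Phi φ < 1 := by
  have h_le : Phi φ ≤ 1 := Finset.prod_le_one (fun j _ => (hφ j).1.le) fun j _ => (hφ j).2.le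
  have h_pow : β ^ 12 < 1 := pow_lt_one₀ hβ.1.le hβ.2 (by norm_num)
  exact (mul_le_of_le_one_right (pow_nonneg hβ.1.le 12) h_le).trans_lt h_pow

/-- The discounted value of the first separation within `n` months after month `m`. -/
noncomputable def truncatedValue (β : ℝ) (φ X : ZMod 12 → ℝ) (n : ℕ) (m : ZMod 12) : ℝ :=
  ∑ i ∈ Finset.range n, β ^ (i + 1) * (∏ j ∈ Finset.range i, φ (m + ((j : ZMod 12) + 1))) *
    (1 - φ (m + ((i : ZMod 12) + 1))) * X (m + ((i : ZMod 12) + 1))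

theorem Dint_eq_truncatedValue_div (β : ℝ) (φ X : ZMod 12 → ℝ) (m : ZMod 12) :
    Dint β φ X m = truncatedValue β φ X 12 m / (1 - β ^ 12 * Phi φ) := by
  rw [Dint, truncatedValue, Finset.sum_div, Finset.range_eq_Ico,
    ← Finset.Ico_add_one_right_eq_Icc, ← Finset.sum_Ico_add' _ 0 12 1]
  refine Finset.sum_congr rfl fun i _ => ?_
  simp only [wgt, Nat.add_sub_cancel, Nat.cast_add, Nat.cast_one]
  ring

theorem truncatedValue_succ (β : ℝ) (φ X : ZMod 12 → ℝ) (n : ℕ) (m : ZMod 12) :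
    truncatedValue β φ X (n + 1) m = truncatedValue β φ X n m +
      β ^ (n + 1) * (∏ j ∈ Finset.range n, φ (m + ((j : ZMod 12) + 1))) *
        (1 - φ (m + ((n : ZMod 12) + 1))) * X (m + ((n : ZMod 12) + 1)) :=
  Finset.sum_range_succ _ n

theorem truncatedValue_succ_eq_shift (β : ℝ) (φ X : ZMod 12 → ℝ) (n : ℕ) (m : ZMod 12) :
    truncatedValue β φ X (n + 1) m =
      β * φ (m + 1) * truncatedValue β φ X n (m + 1) + β * (1 - φ (m + 1)) * X (m + 1) := by
  have h_index : ∀ i : ℕ, m + (((i + 1 : ℕ) : ZMod 12) + 1) = m + 1 + ((i : ZMod 12) + 1) := by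
    intro i
    push_cast
    ring
  rw [truncatedValue, Finset.sum_range_succ', truncatedValue, Finset.mul_sum]
  congr 1
  · refine Finset.sum_congr rfl fun i _ => ?_
    rw [Finset.prod_range_succ']
    simp only [h_index, Nat.cast_zero, zero_add]
    ring
  · simp

/-- Unrolling the recursion `n` times. -/
theorem eq_truncatedValue_add_of_recursion {β : ℝ} {φ X D : ZMod 12 → ℝ}
    (hD : ∀ m, D m = β * φ (m + 1) * D (m + 1) + β * (1 - φ (m + 1)) * X (m + 1))
    (n : ℕ) (m : ZMod 12) :
    D m = truncatedValue β φ X n m +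
      β ^ n * (∏ j ∈ Finset.range n, φ (m + ((j : ZMod 12) + 1))) * D (m + (n : ZMod 12)) := by
  induction n with
  | zero => simp [truncatedValue]
  | succ n ih =>
    rw [ih, truncatedValue_succ, Finset.prod_range_succ, hD (m + (n : ZMod 12)), Nat.cast_add,
      Nat.cast_one, add_assoc m]
    ring

theorem stmt2 (β : ℝ) (hβ : 0 < β ∧ β < 1) (φ : ZMod 12 → ℝ)
    (hφ : ∀ m, 0 < φ m ∧ φ m < 1) (X : ZMod 12 → ℝ) :
    (∀ m, Dint β φ X m =
        β * φ (m + 1) * Dint β φ X (m + 1) + β * (1 - φ (m + 1)) * X (m + 1)) ∧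
    ∀ D' : ZMod 12 → ℝ,
      (∀ m, D' m = β * φ (m + 1) * D' (m + 1) + β * (1 - φ (m + 1)) * X (m + 1)) →
      D' = Dint β φ X := by
  have h_ne : 1 - β ^ 12 * Phi φ ≠ 0 := (sub_pos.2 (pow_mul_Phi_lt_one hβ hφ)).ne'
  have h_twelve : ((12 : ℕ) : ZMod 12) = 0 := ZMod.natCast_self 12
  refine ⟨fun m => ?_, fun D' hD' => funext fun m => ?_⟩
  · have h_step := truncatedValue_succ_eq_shift β φ X 12 m
    rw [truncatedValue_succ, prod_range_twelve_eq_Phi, h_twelve, zero_add] at h_step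
    rw [Dint_eq_truncatedValue_div, Dint_eq_truncatedValue_div]
    field_simp
    linear_combination h_step
  · have h_unroll := eq_truncatedValue_add_of_recursion hD' 12 m
    rw [prod_range_twelve_eq_Phi, h_twelve, add_zero] at h_unroll
    rw [Dint_eq_truncatedValue_div, eq_div_iff h_ne]
    linear_combination h_unroll
end

section
/- Let β ∈ (0,1), u > 0, and A_max ≥ 1, and set v̄ > 0, X̲ = u/(1 − β), and X̄ = u/(1 − β) + A_max v̄ / (2(1 − β)). Then for every X with X̲ ≤ X ≤ X̄, every v with 0 < v ≤ v̄, every e with 0 ≤ e ≤ v, and every a with 0 ≤ a ≤ A_max, the updated mover value satisfies X̲ ≤ β X + u + (a/2)(v − e)²/v ≤ X̄. -/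
theorem stmt8 (β u Amax vbar : ℝ) (hβ : 0 < β ∧ β < 1) (hu : 0 < u)
    (hA : 1 ≤ Amax) (hvbar : 0 < vbar) :
    ∀ X v e a : ℝ,
      u / (1 - β) ≤ X → X ≤ u / (1 - β) + Amax * vbar / (2 * (1 - β)) →
      0 < v → v ≤ vbar → 0 ≤ e → e ≤ v → 0 ≤ a → a ≤ Amax →
      u / (1 - β) ≤ β * X + u + a / 2 * (v - e) ^ 2 / v ∧
      β * X + u + a / 2 * (v - e) ^ 2 / v ≤
        u / (1 - β) + Amax * vbar / (2 * (1 - β)) := by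
  intro X v e a hXl hXu hv hvv he hev ha haA
  obtain ⟨hβ0, hβ1⟩ := hβ
  have hβ' : 0 < 1 - β := sub_pos.mpr hβ1
  have hlower : u / (1 - β) * (1 - β) = u := div_mul_cancel₀ u hβ'.ne'
  have hwidth : Amax * vbar / (2 * (1 - β)) * (1 - β) = Amax * vbar / 2 := by
    field_simp
  have hsurplus_nonneg : 0 ≤ a / 2 * (v - e) ^ 2 / v := by positivity
  have hsurplus_le : a / 2 * (v - e) ^ 2 / v ≤ Amax * vbar / 2 := by
    have hsq : (v - e) ^ 2 ≤ v ^ 2 :=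
      pow_le_pow_left₀ (sub_nonneg.mpr hev) (sub_le_self v he) 2
    calc a / 2 * (v - e) ^ 2 / v ≤ a / 2 * v ^ 2 / v := by gcongr
      _ = a * v / 2 := by field_simp
      _ ≤ Amax * vbar / 2 := by gcongr
  have hβXl := mul_le_mul_of_nonneg_left hXl hβ0.le
  have hβXu := mul_le_mul_of_nonneg_left hXu hβ0.le
  constructor <;> linarith
end

section
/- Let β ∈ (0,1), u > 0, and let φ : ZMod 12 → ℝ satisfy 0 < φ_m < 1 for all m. Define Φ = ∏_{j=1}^{12} φ_j, A_m = (Σ_{s=0}^{11} β^s ∏_{j=1}^{s} φ_{m+j}) / (1 − β^{12} Φ), w_{m,r} = β^r (∏_{j=1}^{r−1} φ_{m+j}) (1 − φ_{m+r}) / (1 − β^{12} Φ), φ_max = max_m φ_m, φ_min = min_m φ_m, A_max = max_m A_m, v̲ = 1 − φ_max, v̄ = (1 − φ_min)/(1 − φ_max), X̲ = u/(1 − β), X̄ = u/(1 − β) + A_max v̄/(2(1 − β)), and the box K = [X̲, X̄]^{12} × [v̲, v̄]^{12}. Define T : K → (ZMod 12 → ℝ) × (ZMod 12 → ℝ) by: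 given (X, v) ∈ K, set D_m = Σ_{r=1}^{12} w_{m,r} X_{m+r}, ε_m = (β X_{m+1} + u − D_m)/A_m, ε̄_m = min(max(ε_m, 0), v_m), ṽ_m = 1 − φ_m + φ_m ε̄_{m−1}, X̃_m = β X_{m+1} + u + (A_m/2)(v_m − ε̄_m)²/v_m, and T(X, v) = (X̃, ṽ). Then T maps K into itself: for every (X, v) ∈ K, (X̃, ṽ) ∈ K. -/
open Finset

/-- The slope `A_m = (Σ_{s=0}^{11} β^s ∏_{j=1}^{s} φ_{m+j}) / (1 − β^{12} Φ)`. -/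
noncomputable def Aslope (β : ℝ) (φ : ZMod 12 → ℝ) (m : ZMod 12) : ℝ :=
  (∑ s ∈ Finset.range 12, β ^ s * ∏ j ∈ Finset.range s, φ (m + ((j : ZMod 12) + 1))) /
    (1 - β ^ 12 * Phi φ)

/-- The provisional reservation cutoff `ε_m = (β X_{m+1} + u − D_m)/A_m`. -/
noncomputable def epsProv (β u : ℝ) (φ X : ZMod 12 → ℝ) (m : ZMod 12) : ℝ :=
  (β * X (m + 1) + u - Dint β φ X m) / Aslope β φ m

/-- The clamped reservation cutoff `ε̄_m = min(max(ε_m, 0), v_m)`. -/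
noncomputable def epsBar (β u : ℝ) (φ X v : ZMod 12 → ℝ) (m : ZMod 12) : ℝ :=
  min (max (epsProv β u φ X m) 0) (v m)

/-- The updated vacancy stock `ṽ_m = 1 − φ_m + φ_m ε̄_{m−1}`. -/
noncomputable def vTilde (β u : ℝ) (φ X v : ZMod 12 → ℝ) (m : ZMod 12) : ℝ :=
  1 - φ m + φ m * epsBar β u φ X v (m - 1)

/-- The updated mover value `X̃_m = β X_{m+1} + u + (A_m/2)(v_m − ε̄_m)²/v_m`. -/
noncomputable def XTilde (β u : ℝ) (φ X v : ZMod 12 → ℝ) (m : ZMod 12) : ℝ :=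
  β * X (m + 1) + u + Aslope β φ m / 2 * (v m - epsBar β u φ X v m) ^ 2 / v m

/-- The discount normaliser `1 − β^{12} Φ` is positive. -/
lemma one_sub_pow_mul_Phi_pos {β : ℝ} (hβ : 0 < β ∧ β < 1) {φ : ZMod 12 → ℝ}
    (hφ : ∀ m, 0 < φ m ∧ φ m < 1) : 0 < 1 - β ^ 12 * Phi φ := by
  have hΦ₁ : Phi φ ≤ 1 := Finset.prod_le_one (fun j _ => (hφ j).1.le) fun j _ => (hφ j).2.le
  have hpow : β ^ 12 < 1 := pow_lt_one₀ hβ.1.le hβ.2 (by norm_num)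
  have hmul : β ^ 12 * Phi φ ≤ β ^ 12 := mul_le_of_le_one_right (pow_nonneg hβ.1.le 12) hΦ₁
  linarith

lemma Aslope_nonneg {β : ℝ} (hβ : 0 < β ∧ β < 1) {φ : ZMod 12 → ℝ}
    (hφ : ∀ m, 0 < φ m ∧ φ m < 1) (m : ZMod 12) : 0 ≤ Aslope β φ m :=
  div_nonneg
    (Finset.sum_nonneg fun s _ =>
      mul_nonneg (pow_nonneg hβ.1.le s) (Finset.prod_nonneg fun _ _ => (hφ _).1.le))
    (one_sub_pow_mul_Phi_pos hβ hφ).le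

lemma epsBar_nonneg (β u : ℝ) (φ X : ZMod 12 → ℝ) {v : ZMod 12 → ℝ} {m : ZMod 12}
    (hv : 0 ≤ v m) : 0 ≤ epsBar β u φ X v m :=
  le_min (le_max_right _ _) hv

lemma epsBar_le (β u : ℝ) (φ X v : ZMod 12 → ℝ) (m : ZMod 12) : epsBar β u φ X v m ≤ v m :=
  min_le_right _ _

/-- The surplus term `(v − ε)²/v` is at most `v` when `0 ≤ ε ≤ v`. -/
lemma sub_sq_div_le_self {v ε : ℝ} (hv : 0 < v) (h₀ : 0 ≤ ε) (h₁ : ε ≤ v) :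
    (v - ε) ^ 2 / v ≤ v := by
  rw [div_le_iff₀ hv]
  nlinarith

theorem stmt9 (β u : ℝ) (hβ : 0 < β ∧ β < 1) (hu : 0 < u) (φ : ZMod 12 → ℝ)
    (hφ : ∀ m, 0 < φ m ∧ φ m < 1) :
    let φmax := Finset.univ.sup' Finset.univ_nonempty φ
    let φmin := Finset.univ.inf' Finset.univ_nonempty φ
    let Amax := Finset.univ.sup' Finset.univ_nonempty (Aslope β φ)
    let vlo := 1 - φmax
    let vhi := (1 - φmin) / (1 - φmax)
    let Xlo := u / (1 - β)
    let Xhi := u / (1 - β) + Amax * vhi / (2 * (1 - β))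
    ∀ X v : ZMod 12 → ℝ,
      (∀ m, Xlo ≤ X m ∧ X m ≤ Xhi) → (∀ m, vlo ≤ v m ∧ v m ≤ vhi) →
      (∀ m, Xlo ≤ XTilde β u φ X v m ∧ XTilde β u φ X v m ≤ Xhi) ∧
      (∀ m, vlo ≤ vTilde β u φ X v m ∧ vTilde β u φ X v m ≤ vhi) := by
  intro φmax φmin Amax vlo vhi Xlo Xhi X v hX hv
  have hmax : ∀ m, φ m ≤ φmax := fun m => Finset.le_sup' φ (Finset.mem_univ m)
  have hmin : ∀ m, φmin ≤ φ m := fun m => Finset.inf'_le φ (Finset.mem_univ m)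
  have hA : ∀ m, Aslope β φ m ≤ Amax := fun m => Finset.le_sup' (Aslope β φ) (Finset.mem_univ m)
  have hvlo : 0 < vlo :=
    sub_pos.2 ((Finset.sup'_lt_iff Finset.univ_nonempty).2 fun m _ => (hφ m).2)
  have hvhi : 1 ≤ vhi := (one_le_div hvlo).2 (by linarith [hmin 0, hmax 0])
  have hvpos : ∀ m, 0 < v m := fun m => hvlo.trans_le (hv m).1
  have hβ' : 1 - β ≠ 0 := (sub_pos.2 hβ.2).ne'
  have hXlo : β * Xlo + u = Xlo := by
    simp only [Xlo]
    field_simp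
    ring
  have hXhi : β * Xhi + u + Amax / 2 * vhi = Xhi := by
    simp only [Xhi]
    field_simp
    ring
  refine ⟨fun m => ?_, fun m => ?_⟩
  · have hAm := Aslope_nonneg hβ hφ m
    have hsurplus : 0 ≤ (v m - epsBar β u φ X v m) ^ 2 / v m :=
      div_nonneg (sq_nonneg _) (hvpos m).le
    have hsurplus_le : (v m - epsBar β u φ X v m) ^ 2 / v m ≤ vhi :=
      (sub_sq_div_le_self (hvpos m) (epsBar_nonneg β u φ X (hvpos m).le)
        (epsBar_le β u φ X v m)).trans (hv m).2
    have hgain : 0 ≤ Aslope β φ m / 2 * ((v m - epsBar β u φ X v m) ^ 2 / v m) := by positivity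
    have hgain_le : Aslope β φ m / 2 * ((v m - epsBar β u φ X v m) ^ 2 / v m) ≤ Amax / 2 * vhi :=
      mul_le_mul (by linarith [hA m]) hsurplus_le hsurplus (by linarith [hA m])
    have hlo := mul_le_mul_of_nonneg_left (hX (m + 1)).1 hβ.1.le
    have hhi := mul_le_mul_of_nonneg_left (hX (m + 1)).2 hβ.1.le
    rw [XTilde, mul_div_assoc]
    constructor <;> linarith
  · have hε := epsBar_nonneg β u φ X (hvpos (m - 1)).le
    have hε_le := (epsBar_le β u φ X v (m - 1)).trans (hv (m - 1)).2
    have hlo := mul_nonneg (hφ m).1.le hε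
    have hhi := mul_le_mul_of_nonneg_left hε_le (hφ m).1.le
    have hconv : 0 ≤ (1 - φ m) * (vhi - 1) :=
      mul_nonneg (sub_nonneg.2 (hφ m).2.le) (sub_nonneg.2 hvhi)
    rw [vTilde]
    constructor
    · linarith [hmax m, show vlo = 1 - φmax from rfl]
    · linarith
end
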